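/- Let G be a minimal candidate with bipartition (A,B). Then there do not exist four vertices a_1,…,a_4 ∈ A and four vertices b_1,…,b_4 ∈ B such that every a_i is adjacent to every b_j (i.e., G has no K(4,4,0)-subgraph). -/

import Mathlib

open SimpleGraph Function

/-- `G` has a `K_t` minor: there are `t` nonempty, pairwise disjoint "branch sets",
each inducing a connected subgraph, with an edge of `G` between any two of them.
(This is the "`t`-cluster" formulation, equivalent to `K_t` being obtainable from a
subgraph of `G` by contracting edges.) -/
def HasCliqueMinor {V : Type*} (G : SimpleGraph V) (t : ℕ) : Prop :=
  ∃ f : Fin t → Set V,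
    (∀ i, (f i).Nonempty) ∧
    (∀ i, (G.induce (f i)).Connected) ∧
    (Pairwise fun i j => Disjoint (f i) (f j)) ∧
    ∀ i j, i ≠ j → ∃ u ∈ f i, ∃ v ∈ f j, G.Adj u v

/-- `(A, B)` is a bipartition of `G`: the parts partition the vertex set and
every edge joins `A` to `B`. -/
def IsBipartitionWith {V : Type*} (G : SimpleGraph V) (A B : Set V) : Prop :=
  (∀ v, v ∈ A ∨ v ∈ B) ∧ (∀ v, ¬(v ∈ A ∧ v ∈ B)) ∧
    ∀ ⦃u v⦄, G.Adj u v → (u ∈ A ↔ v ∈ B)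

/-- A candidate: a graph with a bipartition `(A,B)`, `|A| ≥ |B| > 0`, every vertex
of `A` of degree at least six, and no `K_6` minor. -/
def IsCandidate {V : Type*} (G : SimpleGraph V) (A B : Set V) : Prop :=
  IsBipartitionWith G A B ∧ B.ncard ≤ A.ncard ∧ B.Nonempty ∧
    (∀ a ∈ A, 6 ≤ (G.neighborSet a).ncard) ∧ ¬ HasCliqueMinor G 6

/-- A minimal candidate: a candidate minimizing `|V(G)| + |E(G)|` among all
(finite) candidates. -/
def IsMinimalCandidate {V : Type*} [Fintype V] (G : SimpleGraph V) (A B : Set V) : Prop :=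
  IsCandidate G A B ∧
    ∀ (n : ℕ) (G' : SimpleGraph (Fin n)) (A' B' : Set (Fin n)),
      IsCandidate G' A' B' →
        Fintype.card V + G.edgeSet.ncard ≤ n + G'.edgeSet.ncard

/-! A `K_{4,4}` with parts `a`, `b` in a minimal candidate `G` is impossible, as one sees from the
components of the rest `R = V \ (a ∪ b)`.

Minimality is used through a single principle, `IsMinimalCandidate.contract`: keeping a set
`Y ⊆ A`, contracting at most `|Y|` disjoint connected sets to vertices of `B` and deleting everything
else never yields a smaller graph in which the degrees in `Y` have not dropped. It implies
`|N(Y)| > |Y|` for proper nonempty `Y ⊆ A` (`hall`), and that two vertices of `B` with a common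
neighbour have at least two of them (`exists_common`).

A `K_{4,4}` contains a `K_5` minor in many ways, so the absence of a `K_6` minor restricts how
components attach. A component touching some `a i` misses some `b j`, and one touching all `a i`
misses all `b j` (`IsK44.k6_of_touch`). By `exists_common`, a vertex of `R` adjacent to some `a i` is
then adjacent to a second one, and so all components not containing it touch at most one `b j`
(`IsK44.k6_of_paths`). A component touching at most one `b j` has, by `hall`, at most as many
vertices in `A` as in `B`, and strictly fewer if it touches no `b j`. Since `|A| ≥ |B|`, the
components together have at least as many vertices in `A` as in `B`.

Each `a i` has degree at least six, hence a neighbour in `R`. If only one component touches the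
`a i`, it touches all of them and no `b j`, so it has strictly fewer vertices in `A` than in `B`; no
other component makes up for this. If two components touch the `a i`, then every component touches
at most one `b j`, so both are balanced between `A` and `B`. Two disjoint paths through the
`K_{4,4}`, one joining neighbours of the `a i` in the two components and one joining their attachments
in `b`, contract to two vertices that glue the components into a smaller candidate (`no_glue`). -/

/-! ### Minors and connected sets -/

/-- Clique minors lift along a minor model `S` of `H` in `G`. -/
theorem HasCliqueMinor.of_model {W V : Type*} {H : SimpleGraph W} {G : SimpleGraph V}
    (S : W → Set V) (hconn : ∀ w, (G.induce (S w)).Connected)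
    (hdisj : Pairwise fun w w' => Disjoint (S w) (S w'))
    (hadj : ∀ w w', H.Adj w w' → ∃ u ∈ S w, ∃ v ∈ S w', G.Adj u v)
    {t : ℕ} (h : HasCliqueMinor H t) : HasCliqueMinor G t := by
  obtain ⟨f, hne, hc, hd, ha⟩ := h
  have key : ∀ i, ∀ w w' : f i, (H.induce (f i)).Reachable w w' →
      ∀ x y : (⋃ w ∈ f i, S w : Set V), x.1 ∈ S w → y.1 ∈ S w' →
      (G.induce (⋃ w ∈ f i, S w)).Reachable x y := by
    intro i w w' hr
    have hin : ∀ w : f i, ∀ x y : (⋃ w ∈ f i, S w : Set V), x.1 ∈ S w → y.1 ∈ S w →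
        (G.induce (⋃ w ∈ f i, S w)).Reachable x y := by
      intro w x y hx hy
      have hsub : S w ⊆ ⋃ w ∈ f i, S w := Set.subset_biUnion_of_mem (u := S) w.2
      exact ((hconn w).preconnected ⟨x, hx⟩ ⟨y, hy⟩).map
        (G.induceHomOfLE hsub).toHom
    obtain ⟨p⟩ := hr
    induction p with
    | nil => exact hin _
    | cons hw _ ih =>
      intro x y hx hy
      obtain ⟨u, hu, v, hv, huv⟩ := hadj _ _ hw
      rename_i w1 w2 w3 _
      have hu' : u ∈ ⋃ w ∈ f i, S w := Set.mem_biUnion w1.2 hu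
      have hv' : v ∈ ⋃ w ∈ f i, S w := Set.mem_biUnion w2.2 hv
      refine (hin w1 x ⟨u, hu'⟩ hx hu).trans ?_
      refine Reachable.trans ?_ (ih ⟨v, hv'⟩ y hv hy)
      exact Adj.reachable (by simpa using huv)
  have hSne : ∀ w, (S w).Nonempty := fun w => by
    have := (hconn w).nonempty
    exact Set.nonempty_coe_sort.1 this
  refine ⟨fun i => ⋃ w ∈ f i, S w, ?_, ?_, ?_, ?_⟩
  · intro i
    obtain ⟨w, hw⟩ := hne i
    obtain ⟨x, hx⟩ := hSne w
    exact ⟨x, Set.mem_biUnion hw hx⟩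
  · intro i
    obtain ⟨w, hw⟩ := hne i
    obtain ⟨x, hx⟩ := hSne w
    have : Nonempty (⋃ w ∈ f i, S w : Set V) := ⟨⟨x, Set.mem_biUnion hw hx⟩⟩
    refine ⟨?_⟩
    rintro ⟨y, hy⟩ ⟨z, hz⟩
    simp only [Set.mem_iUnion] at hy hz
    obtain ⟨w1, h1, hy⟩ := hy
    obtain ⟨w2, h2, hz⟩ := hz
    exact key i ⟨w1, h1⟩ ⟨w2, h2⟩ ((hc i).preconnected _ _) _ _ hy hz
  · intro i j hij
    simp only [Set.disjoint_left, Set.mem_iUnion, not_exists]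
    rintro x ⟨w, hw, hx⟩ w' hw' hx'
    by_cases hww : w = w'
    · subst hww
      exact Set.disjoint_left.1 (hd hij) hw hw'
    · exact Set.disjoint_left.1 (hdisj hww) hx hx'
  · intro i j hij
    obtain ⟨w, hw, w', hw', hww⟩ := ha i j hij
    obtain ⟨u, hu, v, hv, huv⟩ := hadj _ _ hww
    exact ⟨u, Set.mem_biUnion hw hu, v, Set.mem_biUnion hw' hv, huv⟩

theorem connected_induce_singleton {V : Type*} (G : SimpleGraph V) (x : V) :
    (G.induce {x}).Connected := by
  have : Nonempty ({x} : Set V) := ⟨⟨x, rfl⟩⟩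
  refine ⟨?_⟩
  rintro ⟨y, rfl⟩ ⟨z, rfl⟩
  exact Reachable.refl _

/-- A connected set stays connected when a vertex adjacent to it is added. -/
theorem connected_induce_insert {V : Type*} {G : SimpleGraph V} {s : Set V} {x y : V}
    (hs : (G.induce s).Connected) (hy : y ∈ s) (hxy : G.Adj x y) :
    (G.induce (insert x s)).Connected := by
  have : Nonempty (insert x s : Set V) := ⟨⟨x, Set.mem_insert _ _⟩⟩
  have h1 : ∀ z : (insert x s : Set V),
      (G.induce (insert x s)).Reachable z ⟨y, Set.mem_insert_of_mem _ hy⟩ := by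
    rintro ⟨z, rfl | hz⟩
    · exact Adj.reachable (by simpa using hxy)
    · exact (hs.preconnected ⟨z, hz⟩ ⟨y, hy⟩).map
        (G.induceHomOfLE (Set.subset_insert x s)).toHom
  exact ⟨fun z w => (h1 z).trans (h1 w).symm⟩

/-! ### Reductions of a minimal candidate -/

/-- Minimality of a candidate, against competitors on an arbitrary finite vertex type. -/
theorem IsMinimalCandidate.le {V W : Type*} [Fintype V] [Fintype W] {G : SimpleGraph V}
    {A B : Set V} (hmin : IsMinimalCandidate G A B) {H : SimpleGraph W} {C D : Set W}
    (hH : IsCandidate H C D) :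
    Fintype.card V + G.edgeSet.ncard ≤ Fintype.card W + H.edgeSet.ncard := by
  classical
  let e : Fin (Fintype.card W) ≃ W := (Fintype.equivFin W).symm
  obtain ⟨⟨h1, h2, h3⟩, hcard, hne, hdeg, hK⟩ := hH
  let i : H.comap e ≃g H := Iso.comap e H
  have hE : (H.comap e).edgeSet.ncard = H.edgeSet.ncard := by
    rw [← Nat.card_coe_set_eq, ← Nat.card_coe_set_eq]
    exact Nat.card_congr i.mapEdgeSet
  have hpre : ∀ s : Set W, (e ⁻¹' s).ncard = s.ncard := fun s =>
    Set.ncard_preimage_of_injective_subset_range e.injective (by simp)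
  rw [← hE]
  refine hmin.2 _ (H.comap e) (e ⁻¹' C) (e ⁻¹' D)
    ⟨⟨fun v => h1 _, fun v => h2 _, fun u v huv => h3 huv⟩, ?_, ?_, ?_, ?_⟩
  · rwa [hpre, hpre]
  · exact hne.preimage e.surjective
  · intro a ha
    have : (H.comap e).neighborSet a = e ⁻¹' (H.neighborSet (e a)) := rfl
    rw [this, hpre]
    exact hdeg _ ha
  · intro hm
    refine hK (hm.of_model (fun w => {e w}) (fun w => connected_induce_singleton _ _) ?_ ?_)
    · intro w w' hww
      simpa using hww
    · intro w w' hww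
      exact ⟨_, rfl, _, rfl, hww⟩

/-- The reduction by contraction. Keep the vertices of `Y ⊆ A`, contract each of the disjoint
connected sets `S t`, for `t ∈ T`, to a vertex of the new part `B`, and delete everything else. If
every `a ∈ Y` has all its neighbours in pairwise distinct sets `S t` (the neighbour `n` lies in
`S (g n)`), degrees in `Y` do not drop, so `|T| ≤ |Y|` would make this a smaller candidate. -/
theorem IsMinimalCandidate.contract {V : Type*} [Fintype V] {G : SimpleGraph V}
    {A B : Set V} (hmin : IsMinimalCandidate G A B) (Y T : Set V) (S : V → Set V) (g : V → V)
    (hY : Y ⊆ A) (hT : T.Nonempty) (hTY : T.ncard ≤ Y.ncard)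
    (hlt : Y.ncard + T.ncard < Fintype.card V)
    (hconn : ∀ t ∈ T, (G.induce (S t)).Connected)
    (hdisj : ∀ t ∈ T, ∀ t' ∈ T, t ≠ t' → Disjoint (S t) (S t'))
    (hSY : ∀ t ∈ T, Disjoint Y (S t))
    (hg : ∀ a ∈ Y, ∀ n, G.Adj a n → g n ∈ T ∧ n ∈ S (g n))
    (hinj : ∀ a ∈ Y, Set.InjOn g (G.neighborSet a)) : False := by
  classical
  let R : Y ⊕ T → Y ⊕ T → Prop := fun x y => match x, y with
    | .inl a, .inr t => ∃ n ∈ S t, G.Adj a n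
    | .inr t, .inl a => ∃ n ∈ S t, G.Adj a n
    | _, _ => False
  let H : SimpleGraph (Y ⊕ T) :=
    { Adj := R
      symm := ⟨by rintro (a | a) (b | b) h <;> exact h⟩
      loopless := ⟨by rintro (a | a) h <;> exact h⟩ }
  obtain ⟨⟨⟨h1, h2, h3⟩, hcard, hne, hdeg, hK⟩, -⟩ := id hmin
  have hcandH : IsCandidate H (Set.range Sum.inl) (Set.range Sum.inr) := by
    refine ⟨⟨?_, ?_, ?_⟩, ?_, ?_, ?_, ?_⟩
    · rintro (a | a) <;> simp
    · rintro (a | a) <;> simp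
    · rintro (a | a) (b | b) h
      · exact h.elim
      · simp
      · simp
      · exact h.elim
    · rw [← Set.image_univ, ← Set.image_univ, Set.ncard_image_of_injective _ Sum.inl_injective,
        Set.ncard_image_of_injective _ Sum.inr_injective, Set.ncard_univ, Set.ncard_univ,
        Nat.card_coe_set_eq, Nat.card_coe_set_eq]
      exact hTY
    · obtain ⟨t, ht⟩ := hT
      exact ⟨_, ⟨⟨t, ht⟩, rfl⟩⟩
    · rintro _ ⟨a, rfl⟩
      refine (hdeg a (hY a.2)).trans ?_
      let φ : V → Y ⊕ T := fun n => if h : g n ∈ T then .inr ⟨g n, h⟩ else .inl a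
      refine Set.ncard_le_ncard_of_injOn φ ?_ ?_ (Set.toFinite _)
      · intro n hn
        obtain ⟨hn1, hn2⟩ := hg a a.2 n hn
        simp only [φ, hn1, dif_pos]
        exact ⟨n, hn2, hn⟩
      · intro n hn m hm hnm
        have hn1 := (hg a a.2 n hn).1
        have hm1 := (hg a a.2 m hm).1
        simp only [φ, hn1, hm1, dif_pos, Sum.inr.injEq, Subtype.mk.injEq] at hnm
        exact hinj a a.2 hn hm hnm
    -- A `K_6` minor of the contracted graph lifts to `G`.
    · intro hm
      refine hK (hm.of_model (fun w => Sum.elim (fun a : Y => {a.1}) (fun t : T => S t) w) ?_ ?_ ?_)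
      · rintro (a | t)
        · exact connected_induce_singleton _ _
        · exact hconn _ t.2
      · rintro (a | t) (a' | t') hne
        · have : a.1 ≠ a'.1 := fun h => hne (by rw [Subtype.ext h])
          simpa using this
        · simpa using Set.disjoint_left.1 (hSY _ t'.2) a.2
        · simpa using Set.disjoint_left.1 (hSY _ t.2) a'.2
        · exact hdisj _ t.2 _ t'.2 fun h => hne (by rw [Subtype.ext h])
      · rintro (a | t) (a' | t') h
        · exact h.elim
        · obtain ⟨n, hn, h⟩ := h
          exact ⟨a, rfl, n, hn, h⟩
        · obtain ⟨n, hn, h⟩ := h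
          exact ⟨n, hn, a', rfl, h.symm⟩
        · exact h.elim
  have hle := hmin.le hcandH
  have hc : Fintype.card (Y ⊕ T) = Y.ncard + T.ncard := by
    rw [Fintype.card_sum, ← Nat.card_eq_fintype_card, ← Nat.card_eq_fintype_card,
      Nat.card_coe_set_eq, Nat.card_coe_set_eq]
  -- Each edge of `H` comes from an edge of `G`, and distinct edges from distinct ones.
  have hE : H.edgeSet.ncard ≤ G.edgeSet.ncard := by
    have hex : ∀ e : Sym2 (Y ⊕ T), ∃ e' : Sym2 V, e ∈ H.edgeSet →
        ∃ (a : Y) (t : T) (n : V), n ∈ S t ∧ G.Adj a n ∧ e = s(.inl a, .inr t) ∧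
          e' = s(a.1, n) := by
      intro e
      by_cases he : e ∈ H.edgeSet
      · induction e using Sym2.ind with
        | _ x y =>
          rw [mem_edgeSet] at he
          rcases x with a | t <;> rcases y with a' | t'
          · exact he.elim
          · obtain ⟨n, hn, h⟩ := he
            exact ⟨s(a.1, n), fun _ => ⟨a, t', n, hn, h, rfl, rfl⟩⟩
          · obtain ⟨n, hn, h⟩ := he
            exact ⟨s(a'.1, n), fun _ => ⟨a', t, n, hn, h, Sym2.eq_swap, rfl⟩⟩
          · exact he.elim
      · obtain ⟨t, ht⟩ := hT
        exact ⟨s(t, t), fun h => (he h).elim⟩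
    choose φ hφ using hex
    refine Set.ncard_le_ncard_of_injOn φ ?_ ?_ (Set.toFinite _)
    · intro e he
      obtain ⟨a, t, n, hn, h, -, h'⟩ := hφ e he
      rw [h', mem_edgeSet]
      exact h
    · intro e he e' he' hee
      obtain ⟨a, t, n, hn, h, hh, h'⟩ := hφ e he
      obtain ⟨a1, t1, n1, hn1, k, hk, k'⟩ := hφ e' he'
      rw [h', k', Sym2.eq_iff] at hee
      rcases hee with ⟨e1, e2⟩ | ⟨e1, e2⟩
      · have : t = t1 := by
          by_contra hne
          exact Set.disjoint_left.1 (hdisj _ t.2 _ t1.2 fun h => hne (Subtype.ext h)) hn (e2 ▸ hn1)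
        rw [hh, hk, this, Subtype.ext e1]
      · exfalso
        have hnB := (h3 h).1 (hY a.2)
        exact h2 n ⟨e2 ▸ hY a1.2, hnB⟩
  omega

theorem ncard_add_ncard_lt_card {V : Type*} [Fintype V] {Y Z : Set V} (h : Disjoint Y Z) {v : V}
    (hY : v ∉ Y) (hZ : v ∉ Z) : Y.ncard + Z.ncard < Fintype.card V := by
  rw [← Set.ncard_union_eq h, ← Nat.card_eq_fintype_card, ← Set.ncard_univ]
  refine Set.ncard_lt_ncard ⟨Set.subset_univ _, fun h => ?_⟩
  rcases h (Set.mem_univ v) with h | h <;> contradiction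

/-- Hall's condition with surplus one: if `N(Y) ⊆ Z` and `|Z| ≤ |Y|`, then the subgraph induced
on `Y ∪ Z` is a candidate, and it is smaller as it misses `v`. -/
theorem IsMinimalCandidate.hall {V : Type*} [Fintype V] {G : SimpleGraph V}
    {A B : Set V} (hmin : IsMinimalCandidate G A B) {Y Z : Set V} (hY : Y ⊆ A) (hZ : Z ⊆ B)
    (hYne : Y.Nonempty) (hN : ∀ a ∈ Y, ∀ n, G.Adj a n → n ∈ Z) {v : V} (hvY : v ∉ Y)
    (hvZ : v ∉ Z) : Y.ncard < Z.ncard := by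
  by_contra! hle
  have hAB := hmin.1.1.2.1
  have hd : Disjoint Y Z := Set.disjoint_left.2 fun x hx hx' => hAB x ⟨hY hx, hZ hx'⟩
  obtain ⟨y, hy⟩ := hYne
  have hyN : (G.neighborSet y).Nonempty := by
    apply Set.nonempty_of_ncard_ne_zero
    have := hmin.1.2.2.2.1 y (hY hy)
    omega
  obtain ⟨z, hz⟩ := hyN
  refine hmin.contract Y Z (fun t => {t}) id hY ⟨z, hN y hy z hz⟩ hle
    (ncard_add_ncard_lt_card hd hvY hvZ) (fun t _ => connected_induce_singleton _ _) ?_ ?_ ?_ ?_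
  · intro t _ t' _ h
    simpa using h
  · intro t ht
    simpa using Set.disjoint_right.1 hd ht
  · intro a ha n hn
    exact ⟨hN a ha n hn, rfl⟩
  · exact fun a _ => Set.injOn_id _

/-- Two neighbours `y`, `z` of `x` have a second common neighbour: otherwise contracting `x`, `y`
and `z` to one vertex of `B` lowers no degree in `A` and gives a smaller candidate. -/
theorem IsMinimalCandidate.exists_common {V : Type*} [Fintype V] {G : SimpleGraph V}
    {A B : Set V} (hmin : IsMinimalCandidate G A B) {x y z : V} (hx : x ∈ A) (hyz : y ≠ z)
    (hxy : G.Adj x y) (hxz : G.Adj x z) : ∃ x', x' ≠ x ∧ G.Adj x' y ∧ G.Adj x' z := by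
  classical
  by_contra! hno
  obtain ⟨⟨⟨h1, h2, h3⟩, hcard, hne, hdeg, hK⟩, -⟩ := id hmin
  have hy : y ∈ B := (h3 hxy).1 hx
  have hz : z ∈ B := (h3 hxz).1 hx
  have hAB : Disjoint A B := Set.disjoint_left.2 fun v hv hv' => h2 v ⟨hv, hv'⟩
  have hxB : x ∉ B := fun h => h2 x ⟨hx, h⟩
  refine hmin.contract (A \ {x}) (B \ {z}) (fun t => if t = y then {x, y, z} else {t})
    (fun n => if n = z then y else n) Set.sdiff_subset ⟨y, hy, hyz⟩ ?_ ?_ ?_ ?_ ?_ ?_ ?_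
  · rw [Set.ncard_sdiff_singleton_of_mem hx, Set.ncard_sdiff_singleton_of_mem hz]
    omega
  · exact ncard_add_ncard_lt_card (hAB.mono Set.sdiff_subset Set.sdiff_subset) (v := x)
      (by simp) (by simp [hxB])
  · intro t _
    by_cases h : t = y
    · rw [if_pos h, Set.insert_comm]
      exact connected_induce_insert
        (connected_induce_insert (connected_induce_singleton _ z) rfl hxz) (by simp) hxy.symm
    · rw [if_neg h]
      exact connected_induce_singleton _ _
  · rintro t ⟨ht, htz⟩ t' ⟨ht', htz'⟩ hne
    have hxt : t ≠ x := fun h => hxB (h ▸ ht)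
    have hxt' : t' ≠ x := fun h => hxB (h ▸ ht')
    simp only [Set.mem_singleton_iff] at htz htz'
    by_cases h : t = y
    · have : t' ≠ y := fun h' => hne (h.trans h'.symm)
      simp [h, this, hxt', htz']
    · by_cases h' : t' = y
      · simp [h, h', hxt, htz]
      · simpa [h, h'] using hne
  · rintro t ⟨ht, htz⟩
    have hnA : ∀ v ∈ B, v ∉ A := fun v hv hv' => h2 v ⟨hv', hv⟩
    by_cases h : t = y
    · simp [h, Set.disjoint_left]
      grind
    · simp [h, hnA t ht]
  · rintro a ⟨ha, hax⟩ n hn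
    have hnB : n ∈ B := (h3 hn).1 ha
    by_cases h : n = z
    · simp [h, hy, hyz]
    · by_cases h' : n = y <;> simp [h, h', hnB, hy, hyz]
  · rintro a ⟨ha, hax⟩ n hn m hm hnm
    simp only [Set.mem_singleton_iff] at hax
    have hno := hno a hax
    simp only [mem_neighborSet] at hn hm
    simp only at hnm
    grind

/-- Let `C` and `D` be disjoint vertex sets with at least as many vertices in `A` as in `B`, taken
together, such that vertices of `C ∩ A` have at most one neighbour `y` outside `C`, and those of
`D ∩ A` at most one neighbour `z` outside `D`. If disjoint connected sets `S₁` and `S₂`, otherwise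
outside `C ∪ D`, join `c ∈ C ∩ B` to `d ∈ D ∩ B` and `y` to `z`, contract each of them to one vertex
of `B`. The contractions of `S₁` and `S₂` merge `c` with `d` and supply the common vertex for `y`
and `z`, so `C ∪ D` yields a candidate, smaller as it misses `w`. -/
theorem IsMinimalCandidate.no_glue {V : Type*} [Fintype V] {G : SimpleGraph V}
    {A B : Set V} (hmin : IsMinimalCandidate G A B) {C D S₁ S₂ : Set V} {c d y z w : V}
    (hCD : Disjoint C D) (hc : c ∈ C) (hd : d ∈ D) (hcB : c ∈ B) (hdB : d ∈ B)
    (hyB : y ∈ B) (hyC : y ∉ C) (hyD : y ∉ D) (hzC : z ∉ C) (hzD : z ∉ D)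
    (hNC : ∀ a ∈ C, a ∈ A → ∀ n, G.Adj a n → n ∈ C ∨ n = y)
    (hND : ∀ a ∈ D, a ∈ A → ∀ n, G.Adj a n → n ∈ D ∨ n = z)
    (hcard : (C ∩ B).ncard + (D ∩ B).ncard ≤ (C ∩ A).ncard + (D ∩ A).ncard)
    (hS₁ : (G.induce S₁).Connected) (hS₂ : (G.induce S₂).Connected) (hS : Disjoint S₁ S₂)
    (hcS : c ∈ S₁) (hdS : d ∈ S₁) (hyS : y ∈ S₂) (hzS : z ∈ S₂)
    (hSC : ∀ v ∈ S₁, v ∈ C ∨ v ∈ D → v = c ∨ v = d)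
    (hSD : ∀ v ∈ S₂, v ∉ C ∧ v ∉ D)
    (hwC : w ∉ C) (hwD : w ∉ D) (hwy : w ≠ y) : False := by
  classical
  obtain ⟨⟨⟨h1, h2, h3⟩, -, hne, hdeg, hK⟩, -⟩ := id hmin
  have hCDl := Set.disjoint_left.1 hCD
  have hSl := Set.disjoint_left.1 hS
  have hnA : ∀ v ∈ B, v ∉ A := fun v hv hv' => h2 v ⟨hv', hv⟩
  have hY : (C ∩ A ∪ D ∩ A).ncard = (C ∩ A).ncard + (D ∩ A).ncard :=
    Set.ncard_union_eq (hCD.mono Set.inter_subset_left Set.inter_subset_left)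
  have hT : (insert y (C ∩ B ∪ (D ∩ B) \ {d})).ncard ≤ (C ∩ B).ncard + (D ∩ B).ncard := by
    have e1 := Set.ncard_insert_le y (C ∩ B ∪ (D ∩ B) \ {d})
    have e2 := Set.ncard_union_le (C ∩ B) ((D ∩ B) \ {d})
    have e3 := Set.ncard_sdiff_singleton_add_one (s := D ∩ B) (a := d) ⟨hd, hdB⟩
    omega
  have hcy : c ≠ y := fun h => hyC (h ▸ hc)
  have hdc : d ≠ c := fun h => hCDl hc (h ▸ hd)
  have hdz : d ≠ z := fun h => hzD (h ▸ hd)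
  -- Merging `d` with `c` saves the one vertex of `B` that is spent on `y`.
  refine hmin.contract (C ∩ A ∪ D ∩ A) (insert y (C ∩ B ∪ (D ∩ B) \ {d}))
    (fun t => if t = c then S₁ else if t = y then S₂ else {t})
    (fun n => if n = d then c else if n = z then y else n) ?_ ⟨y, by simp⟩ ?_ ?_ ?_ ?_ ?_ ?_ ?_
  · rintro v (h | h) <;> exact h.2
  · omega
  · refine ncard_add_ncard_lt_card (v := w) ?_ (by simp [hwC, hwD]) (by simp [hwC, hwD, hwy])
    rw [Set.disjoint_left]
    rintro v hv hv'
    have hvA : v ∈ A := by rcases hv with h | h <;> exact h.2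
    have hvB : v ∈ B := by
      rcases hv' with rfl | h | h
      · exact hyB
      · exact h.2
      · exact h.1.2
    exact hnA v hvB hvA
  · intro t _
    by_cases h : t = c
    · rwa [if_pos h]
    by_cases h' : t = y
    · rwa [if_neg h, if_pos h']
    · rw [if_neg h, if_neg h']
      exact connected_induce_singleton _ _
  · intro t ht t' ht' htt
    simp only [Set.mem_insert_iff, Set.mem_union, Set.mem_inter_iff, Set.mem_sdiff,
      Set.mem_singleton_iff] at ht ht'
    rw [Set.disjoint_left]
    intro v hv hv'
    have := hSl (a := v)
    have := hSC v
    have := hSD v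
    split_ifs at hv hv' <;> (try simp only [Set.mem_singleton_iff] at hv) <;>
      (try simp only [Set.mem_singleton_iff] at hv') <;> grind
  · intro t ht
    simp only [Set.mem_insert_iff, Set.mem_union, Set.mem_inter_iff, Set.mem_sdiff,
      Set.mem_singleton_iff] at ht
    rw [Set.disjoint_left]
    intro v hv hv'
    simp only [Set.mem_union, Set.mem_inter_iff] at hv
    have := hSC v
    have := hSD v
    have := hnA v
    split_ifs at hv' <;> try simp only [Set.mem_singleton_iff] at hv'
    all_goals grind
  · intro a ha n hn
    simp only [Set.mem_union, Set.mem_inter_iff] at ha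
    have haA : a ∈ A := by tauto
    have hnB : n ∈ B := (h3 hn).1 haA
    have e1 := fun h => hNC a h haA n hn
    have e2 := fun h => hND a h haA n hn
    simp only [Set.mem_insert_iff, Set.mem_union, Set.mem_inter_iff, Set.mem_sdiff,
      Set.mem_singleton_iff]
    grind
  · intro a ha n hn m hm hnm
    simp only [mem_neighborSet] at hn hm
    simp only [Set.mem_union, Set.mem_inter_iff] at ha
    have haA : a ∈ A := by tauto
    have e1 := fun h => hNC a h haA n hn
    have e2 := fun h => hND a h haA n hn
    have e3 := fun h => hNC a h haA m hm
    have e4 := fun h => hND a h haA m hm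
    have := hCDl (a := a)
    have := hCDl (a := n)
    have := hCDl (a := m)
    simp only at hnm
    grind

/-! ### Clique minors from a complete bipartite subgraph -/

theorem HasCliqueMinor.of_lt {V : Type*} {G : SimpleGraph V} {t : ℕ} (f : Fin t → Set V)
    (hc : ∀ i, (G.induce (f i)).Connected)
    (hd : ∀ i j, i < j → Disjoint (f i) (f j))
    (ha : ∀ i j, i < j → ∃ u ∈ f i, ∃ v ∈ f j, G.Adj u v) : HasCliqueMinor G t := by
  refine ⟨f, fun i => Set.nonempty_coe_sort.1 (hc i).nonempty, hc, ?_, ?_⟩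
  · intro i j hij
    rcases lt_or_gt_of_ne hij with h | h
    · exact hd i j h
    · exact (hd j i h).symm
  · intro i j hij
    rcases lt_or_gt_of_ne hij with h | h
    · exact ha i j h
    · obtain ⟨u, hu, v, hv, huv⟩ := ha j i h
      exact ⟨v, hv, u, hu, huv.symm⟩

theorem connected_induce_pair {V : Type*} {G : SimpleGraph V} {x y : V} (h : G.Adj x y) :
    (G.induce {x, y}).Connected :=
  connected_induce_insert (connected_induce_singleton G y) rfl h

/-- The vertices `a i` and `b j` form a (not necessarily induced) `K_{4,4}` in `G`, with parts
`a` and `b`. -/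
structure IsK44 {V : Type*} (G : SimpleGraph V) (a b : Fin 4 → V) : Prop where
  injA : Function.Injective a
  injB : Function.Injective b
  ne : ∀ i j, a i ≠ b j
  adj : ∀ i j, G.Adj (a i) (b j)

theorem IsK44.comp {V : Type*} {G : SimpleGraph V} {a b : Fin 4 → V} (h : IsK44 G a b)
    (σ τ : Equiv.Perm (Fin 4)) : IsK44 G (a ∘ σ) (b ∘ τ) :=
  ⟨h.injA.comp σ.injective, h.injB.comp τ.injective, fun _ _ => h.ne _ _, fun _ _ => h.adj _ _⟩

/-- The branch sets `a₀`, `b₀`, `a₁b₁`, `a₂b₂`, `a₃b₃` form a `K_5` minor of `K_{4,4}`; a connected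
set `C` outside that touches all five completes it to a `K_6` minor. -/
theorem IsK44.k6_of_touch {V : Type*} {G : SimpleGraph V} {a b : Fin 4 → V} (h : IsK44 G a b)
    {C : Set V} (hC : (G.induce C).Connected) (haC : ∀ i, a i ∉ C) (hbC : ∀ i, b i ∉ C)
    (ha : ∃ v ∈ C, G.Adj (a 0) v) (hb : ∃ v ∈ C, G.Adj (b 0) v)
    (hab : ∀ i, ∃ v ∈ C, G.Adj (a i) v ∨ G.Adj (b i) v) : HasCliqueMinor G 6 := by
  have hne := h.ne
  have hne' : ∀ i j, b i ≠ a j := fun i j => (h.ne j i).symm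
  have hA : ∀ i j, a i = a j ↔ i = j := fun _ _ => h.injA.eq_iff
  have hB : ∀ i j, b i = b j ↔ i = j := fun _ _ => h.injB.eq_iff
  have hadj := h.adj
  have hadj' : ∀ i j, G.Adj (b i) (a j) := fun i j => (h.adj j i).symm
  have hpair : ∀ i, ∃ u ∈ ({a i, b i} : Set V), ∃ v ∈ C, G.Adj u v := by
    intro i
    obtain ⟨v, hv, h | h⟩ := hab i
    · exact ⟨_, by simp, v, hv, h⟩
    · exact ⟨_, by simp, v, hv, h⟩
  refine HasCliqueMinor.of_lt ![{a 0}, {b 0}, {a 1, b 1}, {a 2, b 2}, {a 3, b 3}, C] ?_ ?_ ?_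
  · intro i
    fin_cases i
    exacts [connected_induce_singleton _ _, connected_induce_singleton _ _,
      connected_induce_pair (h.adj _ _), connected_induce_pair (h.adj _ _),
      connected_induce_pair (h.adj _ _), hC]
  · intro i j hij
    fin_cases i <;> fin_cases j <;> first
      | exact absurd hij (by decide)
      | simp [Set.disjoint_left, hne, hne', hA, hB, haC, hbC]
  · intro i j hij
    fin_cases i <;> fin_cases j <;> first
      | exact absurd hij (by decide)
      | exact hpair _
      | simp [hadj, hadj', ha, hb]

/-- A path through `c` between two vertices of one side of a `K_{4,4}` and a disjoint path through `C`
between two vertices of the other side give a `K_6` minor, with branch sets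
`a₀c`, `a₁`, `b₀C`, `b₁`, `a₂b₂`, `a₃b₃`. -/
theorem IsK44.k6_of_paths {V : Type*} {G : SimpleGraph V} {a b : Fin 4 → V} (h : IsK44 G a b)
    {C : Set V} {c : V} (hC : (G.induce C).Connected) (haC : ∀ i, a i ∉ C) (hbC : ∀ i, b i ∉ C)
    (hca : ∀ i, c ≠ a i) (hcb : ∀ i, c ≠ b i) (hcC : c ∉ C)
    (h0 : G.Adj (a 0) c) (h1 : G.Adj (a 1) c)
    (hb0 : ∃ v ∈ C, G.Adj (b 0) v) (hb1 : ∃ v ∈ C, G.Adj (b 1) v) : HasCliqueMinor G 6 := by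
  have hne := h.ne
  have hne' : ∀ i j, b i ≠ a j := fun i j => (h.ne j i).symm
  have hA : ∀ i j, a i = a j ↔ i = j := fun _ _ => h.injA.eq_iff
  have hB : ∀ i j, b i = b j ↔ i = j := fun _ _ => h.injB.eq_iff
  have hadj := h.adj
  have hadj' : ∀ i j, G.Adj (b i) (a j) := fun i j => (h.adj j i).symm
  have hac : ∀ i, a i ≠ c := fun i => (hca i).symm
  have hbc : ∀ i, b i ≠ c := fun i => (hcb i).symm
  have h1' := h1.symm
  have hb1' : ∃ v ∈ C, G.Adj v (b 1) := by
    obtain ⟨v, hv, hv'⟩ := hb1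
    exact ⟨v, hv, hv'.symm⟩
  refine HasCliqueMinor.of_lt
    ![{a 0, c}, {a 1}, insert (b 0) C, {b 1}, {a 2, b 2}, {a 3, b 3}] ?_ ?_ ?_
  · intro i
    fin_cases i
    · exact connected_induce_pair h0
    · exact connected_induce_singleton _ _
    · obtain ⟨v, hv, hv'⟩ := hb0
      exact connected_induce_insert hC hv hv'
    · exact connected_induce_singleton _ _
    · exact connected_induce_pair (h.adj _ _)
    · exact connected_induce_pair (h.adj _ _)
  · intro i j hij
    fin_cases i <;> fin_cases j <;> first
      | exact absurd hij (by decide)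
      | simp [hne, hne', hA, hB, haC, hbC, hac, hbc, hcC]
  · intro i j hij
    fin_cases i <;> fin_cases j <;> first
      | exact absurd hij (by decide)
      | simp [hadj, hadj', h1', hb1']

/-- The size of `R ∩ X` is the sum of the sizes of its parts in the fibres of `f : R → ι`. -/
theorem ncard_inter_eq_sum {V ι : Type*} [Fintype V] [Fintype ι] (R X : Set V) (f : R → ι) :
    (R ∩ X).ncard = ∑ i, ({v | ∃ h : v ∈ R, f ⟨v, h⟩ = i} ∩ X).ncard := by
  classical
  simp only [Set.ncard_eq_toFinset_card']
  rw [← Finset.card_biUnion]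
  · congr 1
    ext v
    simp
  · intro i _ j _ hij
    simp only [Finset.disjoint_left, Set.mem_toFinset]
    rintro v ⟨⟨h, rfl⟩, -⟩ ⟨⟨h', rfl⟩, -⟩
    exact hij rfl

/-- A component of `G.induce R`, seen as a set of vertices of `G`, induces a connected subgraph. -/
theorem connected_component {V : Type*} {G : SimpleGraph V} {R : Set V}
    (c : (G.induce R).ConnectedComponent) :
    (G.induce {v | ∃ h : v ∈ R, (G.induce R).connectedComponentMk ⟨v, h⟩ = c}).Connected := by
  let φ : (G.induce R).induce c.supp →g
      G.induce {v | ∃ h : v ∈ R, (G.induce R).connectedComponentMk ⟨v, h⟩ = c} :=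
    { toFun := fun x => ⟨x.1.1, x.1.2, x.2⟩
      map_rel' := fun h => h }
  refine (c.connected_toSimpleGraph : ((G.induce R).induce c.supp).Connected).map φ ?_
  rintro ⟨v, h, hv⟩
  exact ⟨⟨⟨v, h⟩, hv⟩, rfl⟩

/-! ### The components outside a complete bipartite subgraph -/

/-- A minimal candidate has no `K(4,4,0)`-subgraph: there are no four vertices of `A`
and four vertices of `B` with all sixteen pairs adjacent. -/
theorem minimalCandidate_no_K440 {V : Type} [Fintype V] (G : SimpleGraph V)
    (A B : Set V) (hmin : IsMinimalCandidate G A B) :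
    ¬ ∃ (a : Fin 4 → V) (b : Fin 4 → V),
        Function.Injective a ∧ Function.Injective b ∧
        (∀ i, a i ∈ A) ∧ (∀ j, b j ∈ B) ∧
        ∀ i j, G.Adj (a i) (b j) := by
  classical
  rintro ⟨a, b, ha, hb, haA, hbB, hab⟩
  obtain ⟨⟨⟨h1, h2, h3⟩, hcard, hne, hdeg, hK⟩, -⟩ := id hmin
  have hnA : ∀ v ∈ B, v ∉ A := fun v hv hv' => h2 v ⟨hv', hv⟩
  have h44 : IsK44 G a b := ⟨ha, hb, fun i j h => hnA _ (hbB j) (h ▸ haA i), hab⟩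
  -- `R` is the complement of the `K_{4,4}`, and the sets `P c` are the components of `R`.
  let R : Set V := {v | (∀ i, v ≠ a i) ∧ ∀ i, v ≠ b i}
  have hRor : ∀ v, v ∈ R ∨ (∃ i, v = a i) ∨ ∃ i, v = b i := by
    intro v
    by_cases h : v ∈ R
    · exact .inl h
    · simp only [R, Set.mem_ofPred_eq, not_and_or, not_forall, not_not] at h
      exact .inr h
  let P : (G.induce R).ConnectedComponent → Set V := fun c =>
    {v | ∃ h : v ∈ R, (G.induce R).connectedComponentMk ⟨v, h⟩ = c}
  have hPconn : ∀ c, (G.induce (P c)).Connected := fun c => connected_component c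
  have hPR : ∀ c, ∀ v ∈ P c, v ∈ R := fun c v hv => hv.1
  have haP : ∀ c i, a i ∉ P c := fun c i h => (hPR c _ h).1 i rfl
  have hbP : ∀ c i, b i ∉ P c := fun c i h => (hPR c _ h).2 i rfl
  have hPcl : ∀ c, ∀ u ∈ P c, ∀ v ∈ R, G.Adj u v → v ∈ P c := by
    rintro c u ⟨hu, rfl⟩ v hv huv
    refine ⟨hv, ?_⟩
    rw [ConnectedComponent.eq]
    exact Adj.reachable (G := G.induce R) (u := ⟨v, hv⟩) (v := ⟨u, hu⟩) huv.symm
  have hPdisj : ∀ c d, c ≠ d → Disjoint (P c) (P d) := by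
    intro c d hcd
    rw [Set.disjoint_left]
    rintro v ⟨_, rfl⟩ ⟨_, rfl⟩
    exact hcd rfl
  have hex : ∀ v ∈ R, ∃ c, v ∈ P c := fun v hv => ⟨_, hv, rfl⟩
  -- If a component touches some `a i`, it misses some `b j`; if it touches every `a i`, it misses
  -- every `b j`. Otherwise there is a `K_6` minor.
  have hallb : ∀ c i, (∃ v ∈ P c, G.Adj (a i) v) → ∃ j, ∀ v ∈ P c, ¬ G.Adj (b j) v := by
    intro c i hi
    by_contra! hj
    refine hK ((h44.comp (Equiv.swap 0 i) (Equiv.refl _)).k6_of_touch (hPconn c) (fun i => haP _ _)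
      (fun i => hbP _ _) (by simpa using hi) (by simpa using hj 0) fun k => ?_)
    obtain ⟨v, hv, hv'⟩ := hj k
    exact ⟨v, hv, .inr (by simpa using hv')⟩
  have halla : ∀ c, (∀ i, ∃ v ∈ P c, G.Adj (a i) v) → ∀ j, ∀ v ∈ P c, ¬ G.Adj (b j) v := by
    intro c hi j w hw hjw
    refine hK ((h44.comp (Equiv.refl _) (Equiv.swap 0 j)).k6_of_touch (hPconn c) (fun i => haP _ _)
      (fun i => hbP _ _) (by simpa using hi 0) ⟨w, hw, by simpa using hjw⟩ fun k => ?_)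
    obtain ⟨v, hv, hv'⟩ := hi k
    exact ⟨v, hv, .inl (by simpa using hv')⟩
  have houta : ∀ i, ∃ v ∈ R, G.Adj (a i) v := by
    intro i
    by_contra! hno
    have hsub : G.neighborSet (a i) ⊆ Set.range b := by
      intro v hv
      rcases hRor v with h | ⟨j, rfl⟩ | ⟨j, rfl⟩
      · exact (hno v h hv).elim
      · exact (hnA _ ((h3 hv).1 (haA i)) (haA j)).elim
      · exact ⟨j, rfl⟩
    have e1 := Set.ncard_le_ncard hsub (Set.toFinite _)
    have e2 := hdeg _ (haA i)
    rw [← Set.image_univ, Set.ncard_image_of_injective _ hb, Set.ncard_univ, Nat.card_fin] at e1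
    omega
  -- A second common neighbour of `v` and a vertex `b j` untouched by the component of `v`
  -- can only be another `a k`.
  have htwo : ∀ v ∈ R, ∀ i, G.Adj (a i) v → ∃ j, j ≠ i ∧ G.Adj (a j) v := by
    intro v hv i hiv
    obtain ⟨c, hc⟩ := hex v hv
    obtain ⟨j, hj⟩ := hallb c i ⟨v, hc, hiv⟩
    obtain ⟨x, hx, hxv, hxj⟩ := hmin.exists_common (haA i) (hv.2 j) hiv (hab i j)
    rcases hRor x with h | ⟨k, rfl⟩ | ⟨k, rfl⟩
    · exact (hj x (hPcl c v hc x h hxv.symm) hxj.symm).elim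
    · exact ⟨k, fun h => hx (h ▸ rfl), hxv⟩
    · exact (hnA _ (hbB k) ((h3 hxj).2 (hbB j))).elim
  have hperm : ∀ i j : Fin 4, i ≠ j → ∃ σ : Equiv.Perm (Fin 4), σ 0 = i ∧ σ 1 = j := by decide
  -- Then `v` links two of the `a i`, so components not containing `v` touch at most one `b j`.
  have hone : ∀ v ∈ R, ∀ i, G.Adj (a i) v → ∀ c, v ∉ P c →
      ∃ j, ∀ k, k ≠ j → ∀ u ∈ P c, ¬ G.Adj (b k) u := by
    intro v hv i hiv c hvc
    obtain ⟨j, hji, hjv⟩ := htwo v hv i hiv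
    by_contra! hno
    obtain ⟨k, -, hk⟩ := hno 0
    obtain ⟨l, hlk, hl⟩ := hno k
    obtain ⟨σ, rfl, rfl⟩ := hperm i j hji.symm
    obtain ⟨τ, rfl, rfl⟩ := hperm k l hlk.symm
    exact hK ((h44.comp σ τ).k6_of_paths (hPconn c) (fun i => haP _ _) (fun i => hbP _ _)
      (fun i => hv.1 _) (fun i => hv.2 _) hvc hiv hjv hk hl)
  have hNP : ∀ c j, (∀ k, k ≠ j → ∀ u ∈ P c, ¬ G.Adj (b k) u) →
      ∀ u ∈ P c, u ∈ A → ∀ n, G.Adj u n → n ∈ P c ∨ n = b j := by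
    intro c j hj u hu huA n hn
    rcases hRor n with h | ⟨k, rfl⟩ | ⟨k, rfl⟩
    · exact .inl (hPcl c u hu n h hn)
    · exact (hnA _ ((h3 hn).1 huA) (haA k)).elim
    · by_cases hkj : k = j
      · exact .inr (by rw [hkj])
      · exact (hj k hkj u hu hn.symm).elim
  -- Hall's condition, applied to the vertices of `A` in a component touching at most one `b j`, or
  -- none, respectively.
  have hle : ∀ c j, (∀ k, k ≠ j → ∀ u ∈ P c, ¬ G.Adj (b k) u) →
      (P c ∩ A).ncard ≤ (P c ∩ B).ncard := by
    intro c j hj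
    by_cases hemp : (P c ∩ A).Nonempty
    · have := hmin.hall (Y := P c ∩ A) (Z := insert (b j) (P c ∩ B)) (v := a 0)
        Set.inter_subset_right (Set.insert_subset (hbB j) Set.inter_subset_right) hemp ?_
        (fun h => haP c 0 h.1) ?_
      · have := Set.ncard_insert_le (b j) (P c ∩ B)
        omega
      · rintro u ⟨hu, huA⟩ n hn
        rcases hNP c j hj u hu huA n hn with h | h
        · exact .inr ⟨h, (h3 hn).1 huA⟩
        · exact .inl h
      · rintro (h | h)
        · exact h44.ne _ _ h
        · exact haP c 0 h.1
    · rw [Set.not_nonempty_iff_eq_empty.1 hemp]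
      simp
  have hlt : ∀ c, (∀ k, ∀ u ∈ P c, ¬ G.Adj (b k) u) → (P c ∩ A).ncard < (P c ∩ B).ncard := by
    intro c hj
    by_cases hemp : (P c ∩ A).Nonempty
    · refine hmin.hall (v := a 0) Set.inter_subset_right Set.inter_subset_right hemp ?_
        (fun h => haP c 0 h.1) (fun h => haP c 0 h.1)
      rintro u ⟨hu, huA⟩ n hn
      rcases hNP c 0 (fun k _ => hj k) u hu huA n hn with h | rfl
      · exact ⟨h, (h3 hn).1 huA⟩
      · exact (hj 0 u hu hn.symm).elim
    · obtain ⟨v, hv⟩ := Set.nonempty_coe_sort.1 (hPconn c).nonempty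
      have hvB : v ∈ B := (h1 v).resolve_left fun h => hemp ⟨v, hv, h⟩
      rw [Set.not_nonempty_iff_eq_empty.1 hemp, Set.ncard_empty, Set.ncard_pos]
      exact ⟨v, hv, hvB⟩
  -- `A` and `B` lose four vertices each outside `R`.
  have hsum : ∑ c, (P c ∩ B).ncard ≤ ∑ c, (P c ∩ A).ncard := by
    have eA := ncard_inter_eq_sum R A (G.induce R).connectedComponentMk
    have eB := ncard_inter_eq_sum R B (G.induce R).connectedComponentMk
    have fA : A.ncard = (R ∩ A).ncard + 4 := by
      have : A = (R ∩ A) ∪ Set.range a := by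
        ext v
        constructor
        · intro hv
          rcases hRor v with h | ⟨j, rfl⟩ | ⟨j, rfl⟩
          · exact .inl ⟨h, hv⟩
          · exact .inr ⟨j, rfl⟩
          · exact (hnA _ (hbB j) hv).elim
        · rintro (h | ⟨j, rfl⟩)
          · exact h.2
          · exact haA j
      conv_lhs => rw [this]
      rw [Set.ncard_union_eq, ← Set.image_univ, Set.ncard_image_of_injective _ ha, Set.ncard_univ,
        Nat.card_fin]
      rw [Set.disjoint_left]
      rintro _ h ⟨j, rfl⟩
      exact h.1.1 j rfl
    have fB : B.ncard = (R ∩ B).ncard + 4 := by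
      have : B = (R ∩ B) ∪ Set.range b := by
        ext v
        constructor
        · intro hv
          rcases hRor v with h | ⟨j, rfl⟩ | ⟨j, rfl⟩
          · exact .inl ⟨h, hv⟩
          · exact (hnA _ hv (haA j)).elim
          · exact .inr ⟨j, rfl⟩
        · rintro (h | ⟨j, rfl⟩)
          · exact h.2
          · exact hbB j
      conv_lhs => rw [this]
      rw [Set.ncard_union_eq, ← Set.image_univ, Set.ncard_image_of_injective _ hb, Set.ncard_univ,
        Nat.card_fin]
      rw [Set.disjoint_left]
      rintro _ h ⟨j, rfl⟩
      exact h.1.2 j rfl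
    change _ = ∑ c, (P c ∩ A).ncard at eA
    change _ = ∑ c, (P c ∩ B).ncard at eB
    omega
  obtain ⟨v, hvR, hv⟩ := houta 0
  obtain ⟨c, hvc⟩ := hex v hvR
  -- Either a second component touches some `a i`, or only the component `c` does.
  by_cases hother : ∃ i, ∃ w ∈ R, w ∉ P c ∧ G.Adj (a i) w
  · obtain ⟨i, w, hwR, hwc, hw⟩ := hother
    obtain ⟨d, hwd⟩ := hex w hwR
    have hcd : c ≠ d := fun h => hwc (h ▸ hwd)
    have hdisj := hPdisj c d hcd
    have hvd : v ∉ P d := Set.disjoint_left.1 hdisj hvc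
    have hallone : ∀ e, ∃ j, ∀ k, k ≠ j → ∀ u ∈ P e, ¬ G.Adj (b k) u := by
      intro e
      by_cases hve : v ∈ P e
      · refine hone w hwR i hw e fun hwe => ?_
        rcases hve with ⟨_, rfl⟩
        rcases hwe with ⟨_, hwe⟩
        rcases hwd with ⟨_, rfl⟩
        rcases hvc with ⟨_, rfl⟩
        exact hcd hwe.symm
      · exact hone v hvR 0 hv e hve
    have hleall : ∀ e, (P e ∩ A).ncard ≤ (P e ∩ B).ncard := fun e => by
      obtain ⟨j, hj⟩ := hallone e
      exact hle e j hj
    -- No component has more vertices in `A` than in `B`, and there is no deficit in total.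
    have heq := (Finset.sum_eq_sum_iff_of_le (s := Finset.univ) fun e _ => hleall e).1
      (le_antisymm (Finset.sum_le_sum fun e _ => hleall e) hsum)
    have hec := heq c (Finset.mem_univ _)
    have hed := heq d (Finset.mem_univ _)
    obtain ⟨jc, hjc⟩ := hallone c
    obtain ⟨jd, hjd⟩ := hallone d
    have hthird : ∀ i j : Fin 4, ∃ k, k ≠ i ∧ k ≠ j := by decide
    obtain ⟨y, hy0, hyi⟩ := hthird 0 i
    obtain ⟨x, hxc, hxd⟩ := hthird jc jd
    have hvB : v ∈ B := (h3 hv).1 (haA 0)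
    have hwB : w ∈ B := (h3 hw).1 (haA i)
    have hvb := hvR.2
    have hwb := hwR.2
    have hne := h44.ne
    have hne' : ∀ i j, b i ≠ a j := fun i j => (hne j i).symm
    have hA : ∀ i j, a i = a j ↔ i = j := fun _ _ => ha.eq_iff
    have hB : ∀ i j, b i = b j ↔ i = j := fun _ _ => hb.eq_iff
    -- Glue the two components: `w`, `v` are joined by the path `w - a i - b x - a 0 - v` and
    -- `b jd`, `b jc` through `a y`.
    refine hmin.no_glue (C := P c) (D := P d) (c := v) (d := w) (y := b jc) (z := b jd) (w := a 0)
      (S₁ := {w, a i, v, a 0, b x}) (S₂ := {b jd, b jc, a y}) hdisj hvc hwd hvB hwB (hbB jc)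
      (hbP _ _) (hbP _ _) (hbP _ _) (hbP _ _) (hNP c jc hjc) (hNP d jd hjd) (by omega)
      ?_ ?_ ?_ (by simp) (by simp) (by simp) (by simp) ?_ ?_ (haP _ _) (haP _ _) (hne _ _)
    · refine connected_induce_insert (y := a i) (connected_induce_insert (y := b x)
        (connected_induce_insert (y := a 0) (connected_induce_pair (hab 0 x))
          (by simp) hv.symm) (by simp) (hab i x)) (by simp) hw.symm
    · exact connected_induce_insert (y := a y) (connected_induce_pair (hab y jc).symm) (by simp)
        (hab y jd).symm
    · rw [Set.disjoint_right]
      rintro u (rfl | rfl | rfl) <;>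
        simp [hA, hB, hne, hne', (hvb _).symm, (hwb _).symm, (hvR.1 _).symm, (hwR.1 _).symm,
          hxc.symm, hxd.symm, hy0, hyi]
    · rintro u (rfl | rfl | rfl | rfl | rfl) <;> simp [haP, hbP]
    · rintro u (rfl | rfl | rfl) <;> simp [haP, hbP]
  · push Not at hother
    have htouch : ∀ i, ∃ w ∈ P c, G.Adj (a i) w := by
      intro i
      obtain ⟨w, hw, hiw⟩ := houta i
      by_cases hwc : w ∈ P c
      · exact ⟨w, hwc, hiw⟩
      · exact (hother i w hw hwc hiw).elim
    -- Component `c` touches all `a i`, hence no `b j`, and so has a deficit that nothing compensates.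
    have hltc := hlt c (halla c htouch)
    have hleall : ∀ e, (P e ∩ A).ncard ≤ (P e ∩ B).ncard := fun e => by
      by_cases hve : v ∈ P e
      · rcases hve with ⟨_, rfl⟩
        rcases hvc with ⟨_, rfl⟩
        exact hltc.le
      · obtain ⟨j, hj⟩ := hone v hvR 0 hv e hve
        exact hle e j hj
    have := Finset.sum_lt_sum (s := Finset.univ) (fun e _ => hleall e) ⟨c, Finset.mem_univ _, hltc⟩
    omega
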